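/- Let z, s ∈ ℝ with s ≠ −1. For every finite complex Borel measure f on ℝ of the form f = g·λ + c·δ_z, where g ∈ L¹(ℝ; ℂ), c ∈ ℂ, λ is Lebesgue measure and δ_z is the Dirac measure at z, there exists a unique finite complex Borel measure u on ℝ such that for every test function φ ∈ C_c^∞(ℝ): ∫_ℝ ( −(p−z)·φ'(p) − (s+1)·φ(p) ) du(p) = ∫_ℝ φ df. Moreover this u has the form u = h·λ + d·δ_z with h ∈ L¹(ℝ; ℂ), d = −(s+1)^{−1}·c, and its total variation norm satisfies ‖u‖ ≤ |s+1|^{−1}·‖f‖. -/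

import Mathlib

open MeasureTheory
open scoped Classical

lemma fuchs_psi_bdd {φ : ℝ → ℝ} (hφ : ContDiff ℝ (⊤ : ℕ∞) φ) (hc : HasCompactSupport φ) (z : ℝ) :
    ∃ C, ∀ p, |(p - z) * deriv φ p| ≤ C := by
  have h1 : Continuous (fun p => (p - z) * deriv φ p) :=
    (continuous_id.sub continuous_const).mul (hφ.continuous_deriv (by simp))
  have h2 : HasCompactSupport (fun p => (p - z) * deriv φ p) := hc.deriv.mul_left
  obtain ⟨C, hC⟩ := h2.exists_bound_of_continuous h1
  exact ⟨C, hC⟩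

lemma fuchs_deriv (μ : Measure ℝ) (z σ : ℝ) (g : ℝ → ℂ) (hg : Integrable g μ)
    {φ : ℝ → ℝ} (hφ : ContDiff ℝ (⊤ : ℕ∞) φ) (hc : HasCompactSupport φ) (t : ℝ) :
    HasDerivAt (fun t => ∫ p, ((φ (z + Real.exp (σ * t) * (p - z)) : ℝ) : ℂ) * g p ∂μ)
      (∫ p, ((σ * (Real.exp (σ * t) * (p - z)) * deriv φ (z + Real.exp (σ * t) * (p - z)) : ℝ) : ℂ)
        * g p ∂μ) t := by
  obtain ⟨C, hC⟩ := fuchs_psi_bdd hφ hc z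
  obtain ⟨D, hD⟩ := hc.exists_bound_of_continuous hφ.continuous
  have hcd : Continuous (deriv φ) := hφ.continuous_deriv (by simp)
  have hcc := hφ.continuous
  refine (hasDerivAt_integral_of_dominated_loc_of_deriv_le (μ := μ) (s := Set.univ) (x₀ := t)
    (F := fun t p => ((φ (z + Real.exp (σ * t) * (p - z)) : ℝ) : ℂ) * g p)
    (F' := fun t p => ((σ * (Real.exp (σ * t) * (p - z)) *
      deriv φ (z + Real.exp (σ * t) * (p - z)) : ℝ) : ℂ) * g p)
    (bound := fun p => |σ| * C * ‖g p‖) Filter.univ_mem ?_ ?_ ?_ ?_ ?_ ?_).2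
  · refine Filter.Eventually.of_forall fun t => ?_
    exact (Continuous.aestronglyMeasurable (by fun_prop)).mul hg.1
  · refine hg.bdd_mul (c := D) (Continuous.aestronglyMeasurable (by fun_prop)) ?_
    refine Filter.Eventually.of_forall fun p => ?_
    rw [Complex.norm_real]; exact hD _
  · exact (Continuous.aestronglyMeasurable (by fun_prop)).mul hg.1
  · refine Filter.Eventually.of_forall fun p t _ => ?_
    rw [norm_mul, Complex.norm_real, mul_assoc σ, norm_mul, Real.norm_eq_abs, Real.norm_eq_abs]
    have := hC (z + Real.exp (σ * t) * (p - z))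
    rw [add_sub_cancel_left] at this
    gcongr
  · exact hg.norm.const_mul _
  · refine Filter.Eventually.of_forall fun p t _ => ?_
    have h0 : HasDerivAt (fun t => z + Real.exp (σ * t) * (p - z))
        (σ * (Real.exp (σ * t) * (p - z))) t := by
      have := ((((hasDerivAt_id t).const_mul σ).exp).mul_const (p - z)).const_add z
      refine this.congr_deriv ?_
      simp only [id]; ring
    have h1 := (((hφ.differentiable (by simp)) (z + Real.exp (σ * t) * (p - z))).hasDerivAt.comp t h0)
    have h2 := (h1.ofReal_comp).mul_const (g p)
    refine h2.congr_deriv ?_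
    push_cast; ring

lemma fuchs_test {φ : ℝ → ℝ} (hφ : ContDiff ℝ (⊤ : ℕ∞) φ) (hc : HasCompactSupport φ) (z R : ℝ)
    (hR : R ≠ 0) : ContDiff ℝ (⊤ : ℕ∞) (fun p => φ (z + R * (p - z))) ∧
      HasCompactSupport (fun p => φ (z + R * (p - z))) ∧
      ∀ p, deriv (fun p => φ (z + R * (p - z))) p = R * deriv φ (z + R * (p - z)) := by
  refine ⟨hφ.comp (by fun_prop), ?_, fun p => ?_⟩
  · exact hc.comp_homeomorph (((Homeomorph.addRight (-z)).trans (Homeomorph.mulLeft₀ R hR)).trans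
      (Homeomorph.addLeft z))
  · have h0 : HasDerivAt (fun p => z + R * (p - z)) R p := by
      simpa using (((hasDerivAt_id p).sub_const z).const_mul R).const_add z
    have h1 := (((hφ.differentiable (by simp)) (z + R * (p - z))).hasDerivAt.comp p h0)
    rw [mul_comm]; exact h1.deriv

lemma fuchs_uniq (μ : Measure ℝ) (z a : ℝ) (ha : a ≠ 0) (g : ℝ → ℂ)
    (hg : Integrable g μ)
    (H : ∀ φ : ℝ → ℝ, ContDiff ℝ (⊤ : ℕ∞) φ → HasCompactSupport φ →
      ∫ p, ((-(p - z) * deriv φ p - a * φ p : ℝ) : ℂ) * g p ∂μ = 0) : g =ᵐ[μ] 0 := by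
  refine ae_eq_zero_of_integral_contDiff_smul_eq_zero hg.locallyIntegrable fun φ hφ hc => ?_
  obtain ⟨D, hD⟩ := hc.exists_bound_of_continuous hφ.continuous
  have hcc := hφ.continuous
  have hcd : Continuous (deriv φ) := hφ.continuous_deriv (by simp)
  obtain ⟨C, hC⟩ := fuchs_psi_bdd hφ hc z
  set F : ℝ → ℂ := fun t => ∫ p, ((φ (z + Real.exp (a⁻¹ * t) * (p - z)) : ℝ) : ℂ) * g p ∂μ with hF
  have hi1 : ∀ t, Integrable (fun p => ((φ (z + Real.exp (a⁻¹ * t) * (p - z)) : ℝ) : ℂ) * g p) μ := by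
    intro t
    refine hg.bdd_mul (c := D) (Continuous.aestronglyMeasurable (by fun_prop)) ?_
    refine Filter.Eventually.of_forall fun p => ?_
    rw [Complex.norm_real]; exact hD _
  have hd : ∀ t, HasDerivAt F (-F t) t := by
    intro t
    convert fuchs_deriv μ z a⁻¹ g hg hφ hc t using 1
    obtain ⟨h1, h2, h3⟩ := fuchs_test hφ hc z (Real.exp (a⁻¹ * t)) (Real.exp_pos _).ne'
    have h4 := H _ h1 h2
    simp only [h3] at h4
    have h5 : ∫ p, ((a⁻¹ * (Real.exp (a⁻¹ * t) * (p - z)) *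
        deriv φ (z + Real.exp (a⁻¹ * t) * (p - z)) : ℝ) : ℂ) * g p ∂μ
        = ∫ p, ((-(a⁻¹ : ℝ) : ℂ) * (((-(p - z) * (Real.exp (a⁻¹ * t) * deriv φ (z + Real.exp (a⁻¹ * t) * (p - z))) - a * φ (z + Real.exp (a⁻¹ * t) * (p - z)) : ℝ) : ℂ) * g p) -
          ((φ (z + Real.exp (a⁻¹ * t) * (p - z)) : ℝ) : ℂ) * g p) ∂μ := by
      congr 1; ext p
      have : (a : ℂ) ≠ 0 := by exact_mod_cast ha
      push_cast
      field_simp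
      ring
    rw [h5, integral_sub, integral_const_mul, h4]
    · simp [hF]
    · apply Integrable.const_mul
      refine hg.bdd_mul (c := C + |a| * D) (Continuous.aestronglyMeasurable (by fun_prop)) ?_
      refine Filter.Eventually.of_forall fun p => ?_
      rw [Complex.norm_real]
      have e1 := hC (z + Real.exp (a⁻¹ * t) * (p - z))
      have e2 := hD (z + Real.exp (a⁻¹ * t) * (p - z))
      rw [add_sub_cancel_left] at e1
      refine (norm_sub_le _ _).trans (add_le_add ?_ ?_)
      · rw [Real.norm_eq_abs]
        refine le_trans (le_of_eq ?_) e1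
        rw [← abs_neg]; congr 1; ring
      · rw [norm_mul]; exact mul_le_mul_of_nonneg_left e2 (norm_nonneg _)
    · exact hi1 t
  have hconst : ∀ t, (Real.exp t : ℂ) * F t = (Real.exp 0 : ℂ) * F 0 := by
    intro t
    have hd' : ∀ t, HasDerivAt (fun t => ((Real.exp t : ℝ) : ℂ) * F t) 0 t := by
      intro t
      refine (((Real.hasDerivAt_exp t).ofReal_comp).mul (hd t)).congr_deriv ?_
      ring
    exact is_const_of_deriv_eq_zero (fun t => (hd' t).differentiableAt) (fun t => (hd' t).deriv) t 0
  have hb : ∀ t, ‖F t‖ ≤ D * ∫ p, ‖g p‖ ∂μ := by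
    intro t
    rw [← integral_const_mul]
    refine norm_integral_le_of_norm_le (hg.norm.const_mul _) ?_
    refine Filter.Eventually.of_forall fun p => ?_
    rw [norm_mul, Complex.norm_real]
    exact mul_le_mul_of_nonneg_right (hD _) (norm_nonneg _)
  have h0 : F 0 = 0 := by
    have : Filter.Tendsto (fun t => (Real.exp t : ℂ) * F t) Filter.atBot (nhds 0) := by
      refine squeeze_zero_norm (a := fun t => Real.exp t * (D * ∫ p, ‖g p‖ ∂μ)) (fun t => ?_) ?_
      · rw [norm_mul, Complex.norm_real, Real.norm_eq_abs, abs_of_pos (Real.exp_pos _)]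
        exact mul_le_mul_of_nonneg_left (hb t) (Real.exp_pos _).le
      · simpa using Real.tendsto_exp_atBot.mul_const (D * ∫ p, ‖g p‖ ∂μ)
    simp only [hconst] at this
    simpa using tendsto_nhds_unique tendsto_const_nhds this
  simpa [hF] using h0

lemma fuchs_cov {E : Type*} [NormedAddCommGroup E] [NormedSpace ℝ E] (f : ℝ → E) (z R : ℝ)
    (hR : 0 < R) : ∫ p, f (z + R * (p - z)) = R⁻¹ • ∫ p, f p := by
  rw [integral_sub_right_eq_self (fun p => f (z + R * p)) z,
    Measure.integral_comp_mul_left (fun p => f (z + p)) R, integral_add_left_eq_self,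
    abs_of_pos (inv_pos.2 hR)]

lemma fuchs_cov_int {f : ℝ → ℂ} (hf : Integrable f) (z R : ℝ)
    (hR : 0 < R) : Integrable (fun p => f (z + R * (p - z))) :=
  ((hf.comp_add_left z).comp_mul_left' hR.ne').comp_sub_right z

lemma fuchs_exist (z a σ : ℝ) (hσ : σ * σ = 1) (hb : 0 < σ * a) (g : ℝ → ℂ) (hg : Integrable g)
    (hgm : StronglyMeasurable g) :
    ∃ h : ℝ → ℂ, Integrable h ∧ (∫ p, ‖h p‖) ≤ (σ * a)⁻¹ * ∫ p, ‖g p‖ ∧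
      (∀ φ : ℝ → ℝ, ContDiff ℝ (⊤ : ℕ∞) φ → HasCompactSupport φ →
        (∫ p, ((-(p - z) * deriv φ p - a * φ p : ℝ) : ℂ) * h p)
          = (∫ p, ((φ p : ℝ) : ℂ) * g p)) := by
  set b := σ * a with hbdef
  set μ := (volume : Measure ℝ).restrict (Set.Ioi 0) with hμ
  set K : ℝ → ℝ → ℂ := fun p τ =>
    ((Real.exp (-b * τ) * Real.exp (σ * τ) : ℝ) : ℂ) * g (z + Real.exp (σ * τ) * (p - z)) with hK
  have hexp : Integrable (fun τ => Real.exp (-b * τ)) μ :=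
    integrableOn_exp_mul_Ioi (by linarith) 0
  have hnorm : ∀ τ, ∫ p, ‖K p τ‖ = Real.exp (-b * τ) * ∫ p, ‖g p‖ := by
    intro τ
    simp only [hK, norm_mul, Complex.norm_real]
    rw [integral_const_mul, fuchs_cov (fun p => ‖g p‖) z _ (Real.exp_pos _)]
    have := (Real.exp_pos (σ * τ)).ne'
    simp only [Real.norm_eq_abs, Real.abs_exp, smul_eq_mul]
    field_simp
  have hKm : StronglyMeasurable (Function.uncurry K) := by
    refine StronglyMeasurable.mul (Continuous.stronglyMeasurable (by fun_prop)) ?_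
    exact hgm.comp_measurable (by fun_prop)
  have hKi : Integrable (Function.uncurry K) (volume.prod μ) := by
    rw [integrable_prod_iff' hKm.aestronglyMeasurable]
    refine ⟨Filter.Eventually.of_forall fun τ => ?_, ?_⟩
    · exact (fuchs_cov_int hg z (Real.exp (σ * τ)) (Real.exp_pos _)).const_mul
        ((Real.exp (-b * τ) * Real.exp (σ * τ) : ℝ) : ℂ)
    · simp only [Function.uncurry]
      simp only [hnorm]
      exact hexp.mul_const _
  refine ⟨fun p => -(σ : ℂ) * ∫ τ, K p τ ∂μ, ?_, ?_, ?_⟩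
  · exact hKi.integral_prod_left.const_mul _
  · have hσ1 : |σ| = 1 := by
      rw [← sq_eq_sq₀ (abs_nonneg _) zero_le_one, sq_abs]; linarith
    have e1 : ∫ p, ‖-(σ : ℂ) * ∫ τ, K p τ ∂μ‖ ≤ ∫ p, ∫ τ, ‖K p τ‖ ∂μ := by
      refine integral_mono (hKi.integral_prod_left.const_mul _).norm hKi.norm.integral_prod_left ?_
      intro p
      simp only [norm_mul, norm_neg, Complex.norm_real, Real.norm_eq_abs, hσ1, one_mul]
      exact norm_integral_le_integral_norm _
    refine e1.trans (le_of_eq ?_)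
    rw [integral_integral_swap (f := fun p τ => ‖K p τ‖) hKi.norm]
    simp only [hnorm]
    rw [integral_mul_const, hμ, integral_exp_mul_Ioi (by linarith)]
    simp [neg_div]
  · intro φ hφ hc
    have hcc := hφ.continuous
    have hcd : Continuous (deriv φ) := hφ.continuous_deriv (by simp)
    obtain ⟨D, hD⟩ := hc.exists_bound_of_continuous hφ.continuous
    obtain ⟨C, hC⟩ := fuchs_psi_bdd hφ hc z
    set ψ : ℝ → ℝ := fun p => -(p - z) * deriv φ p - a * φ p with hψ
    have hψc : Continuous ψ := by fun_prop
    have hψb : ∀ p, ‖ψ p‖ ≤ C + |a| * D := by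
      intro p
      refine (norm_sub_le _ _).trans (add_le_add ?_ ?_)
      · rw [neg_mul, norm_neg]; exact hC p
      · rw [norm_mul]; exact mul_le_mul_of_nonneg_left (hD p) (norm_nonneg _)
    have hψK : Integrable (Function.uncurry fun p τ => (ψ p : ℂ) * K p τ) (volume.prod μ) := by
      refine hKi.bdd_mul (f := fun x : ℝ × ℝ => (ψ x.1 : ℂ)) (c := C + |a| * D)
        (Continuous.aestronglyMeasurable (by fun_prop)) ?_
      refine Filter.Eventually.of_forall fun p => ?_
      rw [Complex.norm_real]; exact hψb _
    have hinner : ∀ τ, ∫ p, (ψ p : ℂ) * K p τ = (Real.exp (-b * τ) : ℂ) *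
        ∫ y, (ψ (z + Real.exp (-σ * τ) * (y - z)) : ℂ) * g y := by
      intro τ
      have hR := Real.exp_pos (σ * τ)
      have e := fuchs_cov (fun y => (ψ (z + Real.exp (-σ * τ) * (y - z)) : ℂ) * g y) z _ hR
      have e0 : ∀ p : ℝ, z + Real.exp (-σ * τ) * (z + Real.exp (σ * τ) * (p - z) - z) = p := by
        intro p
        rw [add_sub_cancel_left, ← mul_assoc, ← Real.exp_add]
        simp
      simp only [e0] at e
      have e2 : ∀ p, (ψ p : ℂ) * K p τ = ((Real.exp (-b * τ) * Real.exp (σ * τ) : ℝ) : ℂ) *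
          ((ψ p : ℂ) * g (z + Real.exp (σ * τ) * (p - z))) := by
        intro p; simp only [hK]; ring
      simp only [e2]
      rw [integral_const_mul, e, Complex.real_smul]
      have : (Real.exp (σ * τ) : ℂ) ≠ 0 := by exact_mod_cast hR.ne'
      rw [Complex.ofReal_mul, Complex.ofReal_inv]
      field_simp
    set G : ℝ → ℂ := fun t => ∫ p, ((φ (z + Real.exp (-σ * t) * (p - z)) : ℝ) : ℂ) * g p with hG
    have hGb : ∀ t, ‖G t‖ ≤ D * ∫ p, ‖g p‖ := by
      intro t
      rw [← integral_const_mul]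
      refine norm_integral_le_of_norm_le (hg.norm.const_mul _) ?_
      refine Filter.Eventually.of_forall fun p => ?_
      rw [norm_mul, Complex.norm_real]
      exact mul_le_mul_of_nonneg_right (hD _) (norm_nonneg _)
    have hder : ∀ t, HasDerivAt (fun t => ((Real.exp (-b * t) : ℝ) : ℂ) * G t)
        ((σ : ℂ) * ∫ p, (ψ p : ℂ) * K p t) t := by
      intro t
      have h1 := fuchs_deriv volume z (-σ) g hg hφ hc t
      have h2 : HasDerivAt (fun t => Real.exp (-b * t)) (-b * Real.exp (-b * t)) t := by
        refine (((hasDerivAt_id t).const_mul (-b)).exp).congr_deriv ?_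
        simp only [id]; ring
      refine (h2.ofReal_comp.mul h1).congr_deriv ?_
      rw [hinner]
      have i1 : Integrable (fun p => ((φ (z + Real.exp (-σ * t) * (p - z)) : ℝ) : ℂ) * g p) := by
        refine hg.bdd_mul (c := D) (Continuous.aestronglyMeasurable (by fun_prop)) ?_
        refine Filter.Eventually.of_forall fun p => ?_
        rw [Complex.norm_real]; exact hD _
      have i2 : Integrable (fun p => ((-σ * (Real.exp (-σ * t) * (p - z)) *
          deriv φ (z + Real.exp (-σ * t) * (p - z)) : ℝ) : ℂ) * g p) := by
        refine hg.bdd_mul (c := |-σ| * C) (Continuous.aestronglyMeasurable (by fun_prop)) ?_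
        refine Filter.Eventually.of_forall fun p => ?_
        have := hC (z + Real.exp (-σ * t) * (p - z))
        rw [add_sub_cancel_left] at this
        rw [Complex.norm_real, mul_assoc (-σ), norm_mul, Real.norm_eq_abs, Real.norm_eq_abs]
        gcongr
      have key : (σ : ℂ) * ∫ y, (ψ (z + Real.exp (-σ * t) * (y - z)) : ℂ) * g y
          = -(b : ℂ) * G t + ∫ p, ((-σ * (Real.exp (-σ * t) * (p - z)) *
          deriv φ (z + Real.exp (-σ * t) * (p - z)) : ℝ) : ℂ) * g p := by
        rw [hG, ← integral_const_mul, ← integral_const_mul, ← integral_add (i1.const_mul _) i2]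
        congr 1; ext p
        simp only [hψ, hbdef]
        push_cast
        ring
      rw [mul_left_comm, key]
      push_cast
      ring
    have hlim : Filter.Tendsto (fun t => ((Real.exp (-b * t) : ℝ) : ℂ) * G t) Filter.atTop
        (nhds 0) := by
      refine squeeze_zero_norm (a := fun t => Real.exp (-b * t) * (D * ∫ p, ‖g p‖)) (fun t => ?_) ?_
      · rw [norm_mul, Complex.norm_real, Real.norm_eq_abs, abs_of_pos (Real.exp_pos _)]
        exact mul_le_mul_of_nonneg_left (hGb t) (Real.exp_pos _).le
      · have : Filter.Tendsto (fun t => Real.exp (-b * t)) Filter.atTop (nhds 0) :=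
          Real.tendsto_exp_atBot.comp
            (Filter.tendsto_id.const_mul_atTop_of_neg (by linarith : -b < 0))
        simpa using this.mul_const (D * ∫ p, ‖g p‖)
    have hint := integral_Ioi_of_hasDerivAt_of_tendsto' (a := 0) (fun t _ => hder t)
      (hψK.integral_prod_right.const_mul (σ : ℂ)) hlim
    have e3 : ∀ p, (ψ p : ℂ) * (-(σ : ℂ) * ∫ τ, K p τ ∂μ) =
        -(σ : ℂ) * ∫ τ, (ψ p : ℂ) * K p τ ∂μ := by
      intro p; rw [integral_const_mul]; ring
    change ∫ p, (ψ p : ℂ) * (-(σ : ℂ) * ∫ τ, K p τ ∂μ) = _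
    simp only [e3]
    rw [integral_const_mul, integral_integral_swap hψK]
    rw [integral_const_mul] at hint
    rw [neg_mul, hint]
    simp [hG]

lemma fuchs_combine (z : ℝ) (ν : Measure ℝ) [IsFiniteMeasure ν] (g' h : ℝ → ℂ) (d : ℂ)
    (hg' : Integrable g' ν) (hh : Integrable h) :
    ∃ (κ : Measure ℝ) (G : ℝ → ℂ), Integrable G κ ∧
      ∀ w : ℝ → ℂ, Measurable w → (∃ C, ∀ p, ‖w p‖ ≤ C) →
        ∫ p, w p * G p ∂κ = ∫ p, w p * g' p ∂ν - ((∫ p, w p * h p) + d * w z) := by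
  set κ : Measure ℝ := ν + (volume + Measure.dirac z) with hκ
  have a1 : ν ≪ κ := (Measure.le_add_right le_rfl).absolutelyContinuous
  have a2 : (volume : Measure ℝ) ≪ κ :=
    (Measure.le_add_left (Measure.le_add_right le_rfl)).absolutelyContinuous
  have a3 : Measure.dirac z ≪ κ :=
    (Measure.le_add_left (Measure.le_add_left le_rfl)).absolutelyContinuous
  have hd : Integrable (fun _ : ℝ => d) (Measure.dirac z) := integrable_const _
  refine ⟨κ, fun p => (ν.rnDeriv κ p).toReal • g' p - ((volume.rnDeriv κ p).toReal • h p +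
    ((Measure.dirac z).rnDeriv κ p).toReal • d), ?_, ?_⟩
  · exact ((integrable_rnDeriv_smul_iff a1).2 hg').sub
      (((integrable_rnDeriv_smul_iff a2).2 hh).add ((integrable_rnDeriv_smul_iff a3).2 hd))
  · rintro w hw ⟨C, hC⟩
    have i1 : Integrable (fun p => w p * g' p) ν :=
      hg'.bdd_mul hw.aestronglyMeasurable (Filter.Eventually.of_forall hC)
    have i2 : Integrable (fun p => w p * h p) :=
      hh.bdd_mul hw.aestronglyMeasurable (Filter.Eventually.of_forall hC)
    have i3 : Integrable (fun p => w p * d) (Measure.dirac z) :=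
      hd.bdd_mul hw.aestronglyMeasurable (Filter.Eventually.of_forall hC)
    have e : ∀ p, w p * ((ν.rnDeriv κ p).toReal • g' p - ((volume.rnDeriv κ p).toReal • h p +
        ((Measure.dirac z).rnDeriv κ p).toReal • d)) =
        (ν.rnDeriv κ p).toReal • (w p * g' p) - ((volume.rnDeriv κ p).toReal • (w p * h p) +
        ((Measure.dirac z).rnDeriv κ p).toReal • (w p * d)) := by
      intro p; simp only [Complex.real_smul]; ring
    simp only [e]
    rw [integral_sub, integral_add, integral_rnDeriv_smul a1, integral_rnDeriv_smul a2,
      integral_rnDeriv_smul a3, integral_dirac, mul_comm d]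
    · exact (integrable_rnDeriv_smul_iff a2).2 i2
    · exact (integrable_rnDeriv_smul_iff a3).2 i3
    · exact (integrable_rnDeriv_smul_iff a1).2 i1
    · exact ((integrable_rnDeriv_smul_iff a2).2 i2).add ((integrable_rnDeriv_smul_iff a3).2 i3)

/-- for `s ≠ −1`, the Fuchsian operator `L_{z,s} u = (p−z)∂_p u − s·u` is a
bijection of the space `L¹(ℝ) + ℂ·δ_z` of finite complex Borel measures onto itself, with
inverse of total-variation operator norm at most `|s+1|⁻¹`.

A measure of the form `h·λ + d·δ_z` is encoded by the pair `(h, d)`; its total variation norm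
is `∫‖h‖ + ‖d‖` (Lebesgue measure and `δ_z` are mutually singular).  The dual pairing of
`L_{z,s}u` with a test function `φ` is
`∫ (−(p−z)φ'(p) − (s+1)φ(p))·h(p) dp + d·(−(z−z)φ'(z) − (s+1)φ(z))`.
Uniqueness is asserted among all finite complex Borel measures `u' = g'·ν` (every finite
complex measure has this form, `ν` a finite positive measure, `g'` a `ν`-integrable density),
equality of measures being tested on all Borel sets. -/
theorem fuchsian_measure_inversion (z s : ℝ) (hs : s ≠ -1)
    (g : ℝ → ℂ) (hg : Integrable g) (c : ℂ) :
    ∃ h : ℝ → ℂ, ∃ d : ℂ, Integrable h ∧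
      d = -(((s : ℂ) + 1))⁻¹ * c ∧
      (∫ p, ‖h p‖) + ‖d‖ ≤ |s + 1|⁻¹ * ((∫ p, ‖g p‖) + ‖c‖) ∧
      (∀ φ : ℝ → ℝ, ContDiff ℝ (⊤ : ℕ∞) φ → HasCompactSupport φ →
        (∫ p, ((-(p - z) * deriv φ p - (s + 1) * φ p : ℝ) : ℂ) * h p)
            + d * ((-(z - z) * deriv φ z - (s + 1) * φ z : ℝ) : ℂ)
          = (∫ p, ((φ p : ℝ) : ℂ) * g p) + c * ((φ z : ℝ) : ℂ)) ∧
      (∀ ν : Measure ℝ, IsFiniteMeasure ν → ∀ g' : ℝ → ℂ, Integrable g' ν →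
        (∀ φ : ℝ → ℝ, ContDiff ℝ (⊤ : ℕ∞) φ → HasCompactSupport φ →
          (∫ p, ((-(p - z) * deriv φ p - (s + 1) * φ p : ℝ) : ℂ) * g' p ∂ν)
            = (∫ p, ((φ p : ℝ) : ℂ) * g p) + c * ((φ z : ℝ) : ℂ)) →
        ∀ A : Set ℝ, MeasurableSet A →
          ∫ p in A, g' p ∂ν = (∫ p in A, h p) + (if z ∈ A then d else 0)) := by
  have ha : s + 1 ≠ 0 := fun h => hs (by linarith)
  obtain ⟨σ, hσ, hb, hab⟩ : ∃ σ : ℝ, σ * σ = 1 ∧ 0 < σ * (s + 1) ∧ |s + 1| = σ * (s + 1) := by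
    rcases lt_or_gt_of_ne ha with h | h
    · exact ⟨-1, by norm_num, by linarith, by rw [abs_of_neg h]; ring⟩
    · exact ⟨1, by norm_num, by linarith, by rw [abs_of_pos h]; ring⟩
  have hgae := hg.1.ae_eq_mk
  obtain ⟨h, hh, hn, hφ⟩ := fuchs_exist z (s + 1) σ hσ hb (hg.1.mk g) (hg.congr hgae)
    hg.1.stronglyMeasurable_mk
  have hn' : ∫ p, ‖hg.1.mk g p‖ = ∫ p, ‖g p‖ :=
    integral_congr_ae (hgae.mono fun p hp => by simp only [hp])
  have hφ' : ∀ φ : ℝ → ℝ, ∫ p, ((φ p : ℝ) : ℂ) * hg.1.mk g p = ∫ p, ((φ p : ℝ) : ℂ) * g p :=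
    fun φ => integral_congr_ae (hgae.mono fun p hp => by simp only [hp])
  have haC : (s : ℂ) + 1 ≠ 0 := by exact_mod_cast ha
  have hex : ∀ φ : ℝ → ℝ, ContDiff ℝ (⊤ : ℕ∞) φ → HasCompactSupport φ →
        (∫ p, ((-(p - z) * deriv φ p - (s + 1) * φ p : ℝ) : ℂ) * h p)
            + -(((s : ℂ) + 1))⁻¹ * c * ((-(z - z) * deriv φ z - (s + 1) * φ z : ℝ) : ℂ)
          = (∫ p, ((φ p : ℝ) : ℂ) * g p) + c * ((φ z : ℝ) : ℂ) := by
    intro φ h1 h2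
    rw [hφ φ h1 h2, hφ']
    congr 1
    push_cast
    field_simp
    ring
  refine ⟨h, -(((s : ℂ) + 1))⁻¹ * c, hh, rfl, ?_, hex, ?_⟩
  · have e : ‖-(((s : ℂ) + 1))⁻¹ * c‖ = |s + 1|⁻¹ * ‖c‖ := by
      rw [norm_mul, norm_neg, norm_inv]
      congr 2
      rw [← Real.norm_eq_abs, ← Complex.norm_real]
      push_cast; rfl
    rw [e, mul_add, ← hn', hab]
    linarith
  · intro ν hν g' hg' H A hA
    obtain ⟨κ, G, hG, hGw⟩ := fuchs_combine z ν g' h (-(((s : ℂ) + 1))⁻¹ * c) hg' hh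
    have hG0 : G =ᵐ[κ] 0 := by
      refine fuchs_uniq κ z (s + 1) ha G hG fun φ h1 h2 => ?_
      have hcc := h1.continuous
      have hcd : Continuous (deriv φ) := h1.continuous_deriv (by simp)
      obtain ⟨D, hD⟩ := h2.exists_bound_of_continuous h1.continuous
      obtain ⟨C, hC⟩ := fuchs_psi_bdd h1 h2 z
      rw [hGw (fun p => ((-(p - z) * deriv φ p - (s + 1) * φ p : ℝ) : ℂ))
        (Continuous.measurable (by fun_prop)) ⟨C + |s + 1| * D, fun p => ?_⟩, H φ h1 h2,
        hex φ h1 h2, sub_self]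
      rw [Complex.norm_real]
      refine (norm_sub_le _ _).trans (add_le_add ?_ ?_)
      · rw [neg_mul, norm_neg]; exact hC p
      · rw [norm_mul]; exact mul_le_mul_of_nonneg_left (hD p) (norm_nonneg _)
    have h3 := hGw (A.indicator 1) (measurable_one.indicator hA) ⟨1, fun p => by
      by_cases hp : p ∈ A <;> simp [hp]⟩
    have h4 : ∫ p, A.indicator 1 p * G p ∂κ = 0 := by
      rw [integral_congr_ae (g := fun _ => 0)]
      · simp
      · filter_upwards [hG0] with p hp
        simp [hp]
    have h5 : ∀ f : ℝ → ℂ, (fun p => A.indicator 1 p * f p) = A.indicator f := by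
      intro f; ext p
      by_cases hp : p ∈ A <;> simp [hp]
    rw [h4, h5, h5, integral_indicator hA, integral_indicator hA] at h3
    rw [sub_eq_zero.1 h3.symm]
    by_cases hz : z ∈ A <;> simp [hz]
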